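/- Let x₀ < x₁ be real numbers and let the functions T, R_l, R_r, φ₁, φ₂ be as follows: T, R_l, R_r : ℝ → ℂ satisfy T(−k) = conj(T(k)), R_l(−k) = conj(R_l(k)), R_r(−k) = conj(R_r(k)); for every k ∈ ℝ the 2×2 matrix [[T(k), R_l(k)], [R_r(k), T(k)]] is unitary; φ₁(x,k) = R_l(k)e^{-ikx} + e^{ikx} for x ≤ x₀, φ₁(x,k) = T(k)e^{ikx} for x ≥ x₁, φ₂(x,k) = T(k)e^{-ikx} for x ≤ x₀, φ₂(x,k) = R_r(k)e^{ikx} + e^{-ikx} for x ≥ x₁. Suppose moreover that T admits an extension T̃ : {ω ∈ ℂ : Im ω ≥ 0} → ℂ analytic on {Im ω > 0}, with |T̃(ω)| ≤ 1 everywhere and lim_{b→0+} T̃(k+ib) = T(k) for almost all k ∈ ℝ. Let ψ₀ be a Schwartz function supported in (−∞, x₀], t ∈ ℝ, and let u(x) := (2π)^{-1/2} ∫_ℝ (1/2)[(k,ψ₀)_1 φ₁(x,k) + (k,ψ₀)_2 φ₂(x,k)] e^{-itk²} dk with (k,ψ₀)_i := (2π)^{-1/2} ∫_ℝ conj(φ_i(y,k))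 ψ₀(y) dy. Then for every a ≥ x₁: ∫_{[a,∞)} |u(x)|² dx ≤ ∫_{[a,∞)} |(e^{-itH₀}ψ₀)(x)|² dx, where e^{-itH₀}ψ₀ := F*(k ↦ e^{-itk²}(Fψ₀)(k)). That is, the probability that the tunneled particle is located in [a,∞) at time t never exceeds that of the free particle. -/

import Mathlib

open Complex Filter Set MeasureTheory

noncomputable section

/-- `gt` is an extension of `g : ℝ → ℂ` to the closed upper half-plane which is analytic on the
open upper half-plane, bounded by one there, and has non-tangential boundary values `g` a.e. -/
structure HardyExt (g : ℝ → ℂ) (gt : ℂ → ℂ) : Prop where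
  agree : ∀ a : ℝ, gt (a : ℂ) = g a
  analytic : DifferentiableOn ℂ gt {ω : ℂ | 0 < ω.im}
  bounded : ∀ ω : ℂ, 0 ≤ ω.im → ‖gt ω‖ ≤ 1
  boundary : ∀ᵐ a : ℝ ∂volume,
    Tendsto (fun b : ℝ => gt ((a : ℂ) + b * Complex.I)) (nhdsWithin 0 (Ioi 0)) (nhds (g a))


def mol (ε : ℝ) (ω : ℂ) : ℂ := ((1 - I * ε * ω) ^ 2)⁻¹

def hker (Tt : ℂ → ℂ) (ε s : ℝ) (ω : ℂ) : ℂ := Tt ω * Complex.exp (I * ω * s) * mol ε ω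

lemma one_sub_normSq (ε x b : ℝ) : ‖(1 - I * ε * ((x:ℂ) + b * I))‖ ^ 2 = (1 + ε * b) ^ 2 + ε ^ 2 * x ^ 2 := by
  rw [← Complex.normSq_eq_norm_sq, Complex.normSq_apply]
  simp
  ring

lemma mol_bound {ε : ℝ} (hε : 0 < ε) (x : ℝ) {b : ℝ} (hb : 0 ≤ b) :
    ‖mol ε ((x:ℂ) + b * I)‖ ≤ (1 + (ε * x) ^ 2)⁻¹ := by
  rw [mol, norm_inv, norm_pow, one_sub_normSq]
  apply inv_anti₀ (by positivity)
  nlinarith [mul_nonneg hε.le hb, sq_nonneg (ε * b)]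

lemma mol_bound2 {ε : ℝ} (hε : 0 < ε) (x : ℝ) {b : ℝ} (hb : 0 < b) :
    ‖mol ε ((x:ℂ) + b * I)‖ ≤ (ε * b)⁻¹ := by
  rw [mol, norm_inv, norm_pow, one_sub_normSq]
  apply inv_anti₀ (by positivity)
  nlinarith [mul_pos hε hb, sq_nonneg (ε * b), sq_nonneg (ε * x)]

lemma exp_bound {s : ℝ} (hs : 0 ≤ s) (x : ℝ) {b : ℝ} (hb : 0 ≤ b) :
    ‖Complex.exp (I * ((x:ℂ) + b * I) * s)‖ ≤ 1 := by
  rw [Complex.norm_exp]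
  simp
  positivity

lemma ker_bound {T : ℝ → ℂ} {Tt : ℂ → ℂ} (hT : HardyExt T Tt) {ε s : ℝ} (hε : 0 < ε) (hs : 0 ≤ s)
    (x : ℝ) {b : ℝ} (hb : 0 ≤ b) : ‖hker Tt ε s ((x:ℂ) + b * I)‖ ≤ (1 + (ε * x) ^ 2)⁻¹ := by
  rw [hker, norm_mul, norm_mul]
  have h1 : ‖Tt ((x:ℂ) + b * I)‖ ≤ 1 := hT.bounded _ (by simpa using hb)
  have h2 := exp_bound hs x hb
  have h3 := mol_bound hε x hb
  have : ‖Tt ((x:ℂ) + b * I)‖ * ‖Complex.exp (I * ((x:ℂ) + b * I) * s)‖ ≤ 1 :=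
    mul_le_one₀ h1 (norm_nonneg _) h2
  calc _ ≤ 1 * ‖mol ε ((x:ℂ) + b * I)‖ := by gcongr
    _ ≤ _ := by simpa using h3

lemma ker_bound2 {T : ℝ → ℂ} {Tt : ℂ → ℂ} (hT : HardyExt T Tt) {ε s : ℝ} (hε : 0 < ε) (hs : 0 ≤ s)
    (x : ℝ) {b : ℝ} (hb : 0 < b) : ‖hker Tt ε s ((x:ℂ) + b * I)‖ ≤ (ε * b)⁻¹ := by
  rw [hker, norm_mul, norm_mul]
  have h1 : ‖Tt ((x:ℂ) + b * I)‖ ≤ 1 := hT.bounded _ (by simpa using hb.le)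
  have h2 := exp_bound hs x hb.le
  have h3 := mol_bound2 hε x hb
  have : ‖Tt ((x:ℂ) + b * I)‖ * ‖Complex.exp (I * ((x:ℂ) + b * I) * s)‖ ≤ 1 :=
    mul_le_one₀ h1 (norm_nonneg _) h2
  calc _ ≤ 1 * ‖mol ε ((x:ℂ) + b * I)‖ := by gcongr
    _ ≤ _ := by simpa using h3

lemma mol_ne {ε : ℝ} (hε : 0 < ε) {ω : ℂ} (hω : 0 ≤ ω.im) : (1 - I * ε * ω) ^ 2 ≠ 0 := by
  apply pow_ne_zero
  intro h
  have := congrArg Complex.re h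
  simp at this
  nlinarith [mul_nonneg hε.le hω]

lemma ker_diff {T : ℝ → ℂ} {Tt : ℂ → ℂ} (hT : HardyExt T Tt) {ε s : ℝ} (hε : 0 < ε) :
    DifferentiableOn ℂ (hker Tt ε s) {ω : ℂ | 0 < ω.im} := by
  unfold hker mol
  refine (hT.analytic.mul (by fun_prop)).mul (DifferentiableOn.inv (by fun_prop) ?_)
  intro ω hω
  exact mol_ne hε (le_of_lt hω)

lemma int_bd {ε : ℝ} (hε : 0 < ε) : Integrable (fun x : ℝ => (1 + (ε * x) ^ 2)⁻¹) := by
  exact (integrable_inv_one_add_sq).comp_mul_left' hε.ne'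

lemma ker_line_int {T : ℝ → ℂ} {Tt : ℂ → ℂ} (hT : HardyExt T Tt) {ε s : ℝ} (hε : 0 < ε)
    (hs : 0 ≤ s) {b : ℝ} (hb : 0 < b) : Integrable (fun x : ℝ => hker Tt ε s ((x:ℂ) + b * I)) := by
  refine (int_bd hε).mono' ?_ (.of_forall fun x => ker_bound hT hε hs x hb.le)
  apply Continuous.aestronglyMeasurable
  have h : ContinuousOn (hker Tt ε s) {ω : ℂ | 0 < ω.im} := (ker_diff hT hε).continuousOn
  exact h.comp_continuous (by fun_prop) (fun x => by simpa using hb)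

lemma bd_tendsto {ε : ℝ} (hε : 0 < ε) :
    Tendsto (fun x : ℝ => (1 + (ε * x) ^ 2)⁻¹) atTop (nhds 0) := by
  apply tendsto_inv_atTop_zero.comp
  apply tendsto_atTop_add_const_left
  exact (tendsto_pow_atTop two_ne_zero).comp (tendsto_id.const_mul_atTop hε)

lemma ker_shift {T : ℝ → ℂ} {Tt : ℂ → ℂ} (hT : HardyExt T Tt) {ε s : ℝ} (hε : 0 < ε)
    (hs : 0 ≤ s) {b c : ℝ} (hb : 0 < b) (hc : 0 < c) :
    ∫ x : ℝ, hker Tt ε s ((x:ℂ) + b * I) = ∫ x : ℝ, hker Tt ε s ((x:ℂ) + c * I) := by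
  have hrect : ∀ R : ℝ, (∫ x : ℝ in (-R)..R, hker Tt ε s ((x:ℂ) + b * I)) -
      (∫ x : ℝ in (-R)..R, hker Tt ε s ((x:ℂ) + c * I)) +
      I • (∫ y : ℝ in b..c, hker Tt ε s ((R:ℂ) + y * I)) -
      I • (∫ y : ℝ in b..c, hker Tt ε s (((-R : ℝ):ℂ) + y * I)) = 0 := by
    intro R
    have := Complex.integral_boundary_rect_eq_zero_of_differentiableOn (hker Tt ε s)
      (⟨-R, b⟩ : ℂ) (⟨R, c⟩ : ℂ) ?_
    · simpa using this
    · refine (ker_diff hT hε).mono ?_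
      rintro ω ⟨_, hω⟩
      simp only [mem_preimage, mem_uIcc] at hω
      show 0 < ω.im
      rcases hω with h | h <;> linarith [h.1]
  have hside : ∀ σ : ℝ, σ ^ 2 = 1 →
      Tendsto (fun R : ℝ => I • (∫ y : ℝ in b..c, hker Tt ε s (((σ * R : ℝ):ℂ) + y * I)))
      atTop (nhds 0) := by
    intro σ hσ
    rw [tendsto_zero_iff_norm_tendsto_zero]
    refine squeeze_zero (g := fun R => (1 + (ε * R) ^ 2)⁻¹ * |c - b|)
      (fun _ => norm_nonneg _) (fun R => ?_) (by simpa using (bd_tendsto hε).mul_const |c - b|)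
    rw [norm_smul, norm_I, one_mul]
    apply intervalIntegral.norm_integral_le_of_norm_le_const
    intro y hy
    have hy0 : 0 < y := lt_trans (lt_min hb hc) hy.1
    have := ker_bound hT hε hs (σ * R) hy0.le
    refine this.trans (le_of_eq ?_)
    congr 2
    rw [mul_pow, mul_pow, mul_pow, hσ, one_mul]
  have t1 := intervalIntegral_tendsto_integral (ker_line_int hT hε hs hb) tendsto_neg_atTop_atBot tendsto_id
  have t2 := intervalIntegral_tendsto_integral (ker_line_int hT hε hs hc) tendsto_neg_atTop_atBot tendsto_id
  have t3 := hside 1 (by norm_num)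
  have t4 := hside (-1) (by norm_num)
  have := ((t1.sub t2).add t3).sub t4
  simp only [one_mul, neg_one_mul, id] at this
  simp only [hrect] at this
  have h := tendsto_nhds_unique this tendsto_const_nhds
  simp only [add_zero, sub_zero] at h
  exact sub_eq_zero.mp h

lemma ker_line_zero {T : ℝ → ℂ} {Tt : ℂ → ℂ} (hT : HardyExt T Tt) {ε s : ℝ} (hε : 0 < ε)
    (hs : 0 ≤ s) {b : ℝ} (hb : 0 < b) :
    ∫ x : ℝ, hker Tt ε s ((x:ℂ) + b * I) = 0 := by
  have h : Tendsto (fun c : ℝ => ∫ x : ℝ, hker Tt ε s ((x:ℂ) + c * I)) atTop (nhds (∫ x : ℝ, (0:ℂ))) := by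
    apply tendsto_integral_filter_of_dominated_convergence _ _ _ (int_bd hε)
    · filter_upwards with x
      rw [tendsto_zero_iff_norm_tendsto_zero]
      refine squeeze_zero' (g := fun c => (ε * c)⁻¹) (.of_forall fun _ => norm_nonneg _) ?_ ?_
      · filter_upwards [eventually_gt_atTop 0] with c hc using ker_bound2 hT hε hs x hc
      · exact tendsto_inv_atTop_zero.comp (tendsto_id.const_mul_atTop hε)
    · filter_upwards [eventually_gt_atTop 0] with c hc
      exact (ker_line_int hT hε hs hc).aestronglyMeasurable
    · filter_upwards [eventually_gt_atTop 0] with c hc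
      filter_upwards with x using ker_bound hT hε hs x hc.le
  rw [integral_zero] at h
  refine tendsto_nhds_unique (tendsto_const_nhds.congr' ?_) h
  filter_upwards [eventually_gt_atTop 0] with c hc using ker_shift hT hε hs hb hc

lemma ker_zero {T : ℝ → ℂ} {Tt : ℂ → ℂ} (hT : HardyExt T Tt) {ε s : ℝ} (hε : 0 < ε)
    (hs : 0 ≤ s) : ∫ x : ℝ, T x * Complex.exp (I * x * s) * mol ε x = 0 := by
  have h : Tendsto (fun c : ℝ => ∫ x : ℝ, hker Tt ε s ((x:ℂ) + c * I)) (nhdsWithin 0 (Ioi 0))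
      (nhds (∫ x : ℝ, T x * Complex.exp (I * x * s) * mol ε x)) := by
    apply tendsto_integral_filter_of_dominated_convergence _ _ _ (int_bd hε)
    · filter_upwards [hT.boundary] with x hx
      refine (hx.mul ?_).mul ?_
      · apply tendsto_nhdsWithin_of_tendsto_nhds
        apply Continuous.tendsto' (by fun_prop)
        simp
      · apply tendsto_nhdsWithin_of_tendsto_nhds
        unfold mol
        have : ContinuousAt (fun k : ℝ => ((1 - I * ε * ((x:ℂ) + k * I)) ^ 2)⁻¹) 0 := by
          apply ContinuousAt.inv₀ (by fun_prop)
          exact mol_ne hε (by simp)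
        simpa [ContinuousAt] using this
    · filter_upwards [self_mem_nhdsWithin] with c hc
      exact (ker_line_int hT hε hs hc).aestronglyMeasurable
    · filter_upwards [self_mem_nhdsWithin] with c hc
      filter_upwards with x using ker_bound hT hε hs x (le_of_lt hc)
  refine (tendsto_nhds_unique (tendsto_const_nhds.congr' ?_) h).symm
  filter_upwards [self_mem_nhdsWithin] with c hc using (ker_line_zero hT hε hs hc).symm

open scoped FourierTransform ContDiff SchwartzMap

lemma temp_expI : Function.HasTemperateGrowth (fun y : ℝ => Complex.exp (I * y)) := by
  have hd : ∀ n : ℕ, iteratedDeriv n (fun y : ℝ => Complex.exp (I * y)) =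
      fun y : ℝ => I ^ n * Complex.exp (I * y) := by
    intro n
    induction n with
    | zero => simp
    | succ n ih =>
      rw [iteratedDeriv_succ, ih]
      funext y
      have h1 : HasDerivAt (fun y : ℝ => I * (y:ℂ)) I y := by
        simpa using (Complex.ofRealCLM.hasDerivAt (x := y)).const_mul I
      have := (h1.cexp).const_mul (I ^ n)
      rw [this.deriv]
      ring
  have hof : ContDiff ℝ ∞ (fun y : ℝ => (y : ℂ)) := Complex.ofRealCLM.contDiff
  refine ⟨Complex.contDiff_exp.comp (contDiff_const.mul hof), fun n => ⟨0, 1, fun x => ?_⟩⟩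
  rw [norm_iteratedFDeriv_eq_norm_iteratedDeriv, hd]
  rw [norm_mul, norm_pow, norm_I, Complex.norm_exp]
  simp

lemma temp_phase (t : ℝ) : Function.HasTemperateGrowth
    (fun ξ : ℝ => Complex.exp (-(I * t * ((2 * Real.pi * ξ : ℝ) : ℂ) ^ 2))) := by
  have h : Function.HasTemperateGrowth (fun ξ : ℝ => -(t * (2 * Real.pi * ξ) ^ 2)) := by
    fun_prop
  convert temp_expI.comp h using 1
  funext ξ
  simp only [Function.comp]
  congr 1
  push_cast
  ring

def cut (a δ : ℝ) (x : ℝ) : ℝ := Real.smoothTransition ((x - (a - δ)) / δ)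

lemma temp_st : Function.HasTemperateGrowth Real.smoothTransition := by
  have hc : ContDiff ℝ ∞ Real.smoothTransition := Real.smoothTransition.contDiff (n := ⊤)
  have hs : HasCompactSupport (fderiv ℝ Real.smoothTransition) := by
    apply HasCompactSupport.intro (isCompact_Icc (a := (0:ℝ)) (b := 1))
    intro x hx
    rw [mem_Icc, not_and_or, not_le, not_le] at hx
    rcases hx with h | h
    · have : Real.smoothTransition =ᶠ[nhds x] fun _ => 0 := by
        filter_upwards [Iio_mem_nhds h] with y hy using Real.smoothTransition.zero_of_nonpos (le_of_lt hy)
      rw [this.fderiv_eq]; simp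
    · have : Real.smoothTransition =ᶠ[nhds x] fun _ => 1 := by
        filter_upwards [Ioi_mem_nhds h] with y hy using Real.smoothTransition.one_of_one_le (le_of_lt hy)
      rw [this.fderiv_eq]; simp
  have hcd : ContDiff ℝ ∞ (fderiv ℝ Real.smoothTransition) := hc.fderiv_right (by simp)
  refine Function.HasTemperateGrowth.of_fderiv (k := 0) (C := 1)
    (hs.toSchwartzMap hcd).hasTemperateGrowth (hc.differentiable (by simp)) ?_
  intro x
  rw [Real.norm_of_nonneg (Real.smoothTransition.nonneg x)]
  simpa using Real.smoothTransition.le_one x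

lemma temp_cut (a δ : ℝ) : Function.HasTemperateGrowth (fun x => (cut a δ x : ℂ)) := by
  have h : Function.HasTemperateGrowth (fun x : ℝ => (x - (a - δ)) / δ) := by
    simp only [div_eq_mul_inv]
    fun_prop
  have h2 := temp_st.comp h
  exact Function.HasTemperateGrowth.comp (g := Complex.ofReal) (by fun_prop) h2

lemma contDiff_ofReal' : ContDiff ℝ ∞ (fun y : ℝ => (y : ℂ)) := Complex.ofRealCLM.contDiff

lemma l2_pair (H : Lp ℂ 2 (volume : Measure ℝ)) : ∃ K : Lp ℂ 2 (volume : Measure ℝ), ‖K‖ = ‖H‖ ∧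
    ∀ G : 𝓢(ℝ, ℂ), ∫ x, G x * K x = ∫ x, 𝓕 G x * H x := by
  refine ⟨𝓕 H, Lp.norm_fourier_eq H, fun G => ?_⟩
  have e1 := congrArg (fun D => D G) (Lp.fourier_toTemperedDistribution_eq H)
  simp only [TemperedDistribution.fourier_apply, Lp.toTemperedDistribution_apply] at e1
  exact e1.symm

lemma l2_norm (f : Lp ℂ 2 (volume : Measure ℝ)) : ∫ x, ‖f x‖ ^ 2 = ‖f‖ ^ 2 := by
  have h3 : ‖f‖ ^ 2 = RCLike.re (inner ℂ f f) := (inner_self_eq_norm_sq f).symm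
  rw [h3, L2.inner_def, ← integral_re (L2.integrable_inner f f)]
  congr 1; funext x
  exact (inner_self_eq_norm_sq (𝕜 := ℂ) (f x)).symm

lemma plancherel_l1l2 {h : ℝ → ℂ} (h1 : Integrable h) (h2 : MemLp h 2) :
    MemLp (𝓕 h) 2 ∧ ∫ x, ‖𝓕 h x‖ ^ 2 = ∫ x, ‖h x‖ ^ 2 := by
  have hcont : Continuous (𝓕 h) :=
    VectorFourier.fourierIntegral_continuous Real.continuous_fourierChar continuous_inner h1
  obtain ⟨K, hK, hpair⟩ := l2_pair (h2.toLp h)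
  have hKm : MemLp K 2 := Lp.memLp K
  have hKl : LocallyIntegrable K := hKm.locallyIntegrable (by norm_num)
  have key : ∀ᵐ x, K x = 𝓕 h x := by
    apply ae_eq_of_integral_contDiff_smul_eq hKl hcont.locallyIntegrable
    intro g hg hgs
    have hg' : ContDiff ℝ ∞ (fun x => (g x : ℂ)) := contDiff_ofReal'.comp hg
    have hgs' : HasCompactSupport (fun x => (g x : ℂ)) :=
      hgs.comp_left (g := fun y : ℝ => (y : ℂ)) Complex.ofReal_zero
    obtain ⟨G, hGx⟩ : ∃ G : 𝓢(ℝ, ℂ), ∀ x, G x = g x := ⟨hgs'.toSchwartzMap hg', fun _ => rfl⟩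
    have e2 : ∫ x, (𝓕 G) x * h2.toLp h x = ∫ x, (𝓕 G) x * h x := by
      apply integral_congr_ae
      filter_upwards [h2.coeFn_toLp] with x hx
      rw [hx]
    have e3 : ∫ x, (𝓕 (G : ℝ → ℂ)) x * h x = ∫ x, G x * 𝓕 h x := by
      simpa using! VectorFourier.integral_bilin_fourierIntegral_eq_flip
        (ContinuousLinearMap.mul ℂ ℂ) (L := innerₗ ℝ)
        Real.continuous_fourierChar continuous_inner G.integrable h1
    have e4 := hpair G
    rw [e2, SchwartzMap.fourier_coe, e3] at e4
    simpa [hGx] using e4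
  have m : MemLp (𝓕 h) 2 := (memLp_congr_ae key).mp hKm
  refine ⟨m, ?_⟩
  calc _ = ∫ x, ‖K x‖ ^ 2 := by
        apply integral_congr_ae; filter_upwards [key] with x hx; rw [hx]
    _ = ∫ x, ‖h2.toLp h x‖ ^ 2 := by rw [l2_norm, l2_norm, hK]
    _ = _ := by
        apply integral_congr_ae; filter_upwards [h2.coeFn_toLp] with x hx; rw [hx]

lemma vanish {T : ℝ → ℂ} {Tt : ℂ → ℂ} (hT : HardyExt T Tt) (hTm : Measurable T) (f : 𝓢(ℝ, ℂ))
    {a y : ℝ} (hf : ∀ x, a < x → f x = 0) (hy : a ≤ y) :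
    ∫ ξ : ℝ, T (2 * Real.pi * ξ) * Complex.exp (I * (2 * Real.pi * ξ : ℝ) * y) * 𝓕 f ξ = 0 := by
  have hp : 0 < 2 * Real.pi := by positivity
  have hTb : ∀ k, ‖T k‖ ≤ 1 := fun k => by
    rw [← hT.agree]; exact hT.bounded _ (by simp)
  have hexp : ∀ k s : ℝ, ‖Complex.exp (I * k * s)‖ = 1 := fun k s => by
    rw [Complex.norm_exp]; simp
  have hmolm : ∀ ε : ℝ, Measurable (fun ξ : ℝ => mol ε ((2 * Real.pi * ξ : ℝ) : ℂ)) := fun ε => by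
    unfold mol; fun_prop
  have hmolb : ∀ ε : ℝ, 0 < ε → ∀ k : ℝ, ‖mol ε (k : ℂ)‖ ≤ (1 + (ε * k) ^ 2)⁻¹ := fun ε hε k => by
    simpa using mol_bound hε k (le_refl 0)
  set B : ℝ → ℂ := fun ξ => T (2 * Real.pi * ξ) * Complex.exp (I * (2 * Real.pi * ξ : ℝ) * y) with hB
  have hBm : Measurable B := by
    apply Measurable.mul
    · exact hTm.comp (by fun_prop)
    · fun_prop
  have hBb : ∀ ξ, ‖B ξ‖ ≤ 1 := fun ξ => by
    rw [hB]; simp only [norm_mul, hexp, mul_one]; exact hTb _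
  have hA : ∀ ε : ℝ, 0 < ε → Integrable (fun ξ : ℝ => B ξ * mol ε ((2 * Real.pi * ξ : ℝ) : ℂ)) := by
    intro ε hε
    refine ((int_bd hε).comp_mul_left' hp.ne').mono' (hBm.mul (hmolm ε)).aestronglyMeasurable
      (.of_forall fun ξ => ?_)
    rw [norm_mul]
    calc _ ≤ 1 * ‖mol ε ((2 * Real.pi * ξ : ℝ) : ℂ)‖ := by gcongr; exact hBb ξ
      _ ≤ _ := by rw [one_mul]; exact hmolb ε hε _
  have hz : ∀ ε : ℝ, 0 < ε → ∫ ξ : ℝ, B ξ * mol ε ((2 * Real.pi * ξ : ℝ) : ℂ) * 𝓕 f ξ = 0 := by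
    intro ε hε
    have e3 : ∫ x, 𝓕 (fun ξ : ℝ => B ξ * mol ε ((2 * Real.pi * ξ : ℝ) : ℂ)) x * f x =
        ∫ ξ, B ξ * mol ε ((2 * Real.pi * ξ : ℝ) : ℂ) * 𝓕 (f : ℝ → ℂ) ξ := by
      simpa using! VectorFourier.integral_bilin_fourierIntegral_eq_flip (ContinuousLinearMap.mul ℂ ℂ) (L := innerₗ ℝ)
          Real.continuous_fourierChar continuous_inner (hA ε hε) f.integrable
    rw [SchwartzMap.fourier_coe, ← e3]
    apply integral_eq_zero_of_ae
    filter_upwards with x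
    by_cases hx : a < x
    · simp [hf x hx]
    · have := ker_zero hT hε (s := y - x) (by linarith)
      have h0 : ∫ ξ : ℝ, (fun k : ℝ => T k * Complex.exp (I * k * (y - x : ℝ)) * mol ε k) (2 * Real.pi * ξ) = 0 := by
        exact (Measure.integral_comp_mul_left
          (fun k : ℝ => T k * Complex.exp (I * k * (y - x : ℝ)) * mol ε k) (2 * Real.pi)).trans
          (by rw [this, smul_zero])
      have : 𝓕 (fun ξ : ℝ => B ξ * mol ε ((2 * Real.pi * ξ : ℝ) : ℂ)) x = 0 := by
        rw [Real.fourier_real_eq_integral_exp_smul, ← h0]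
        congr 1; funext ξ
        have : Complex.exp (I * ((2 * Real.pi * ξ : ℝ) : ℂ) * (y - x : ℝ)) =
          Complex.exp (((-2 * Real.pi * ξ * x : ℝ) : ℂ) * I) * Complex.exp (I * (2 * Real.pi * ξ : ℝ) * y) := by
          rw [← Complex.exp_add]; congr 1; push_cast; ring
        simp only [this, hB, smul_eq_mul]
        ring
      simp only [this, zero_mul, Pi.zero_apply]
  have hlim : Tendsto (fun ε : ℝ => ∫ ξ : ℝ, B ξ * mol ε ((2 * Real.pi * ξ : ℝ) : ℂ) * 𝓕 f ξ)
      (nhdsWithin 0 (Ioi 0)) (nhds (∫ ξ : ℝ, B ξ * 𝓕 f ξ)) := by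
    apply tendsto_integral_filter_of_dominated_convergence (fun ξ => ‖𝓕 f ξ‖) _ _ (𝓕 f).integrable.norm
    · filter_upwards with ξ
      refine Tendsto.mul_const _ ?_
      nth_rewrite 2 [← mul_one (B ξ)]
      refine Tendsto.const_mul _ ?_
      apply tendsto_nhdsWithin_of_tendsto_nhds
      unfold mol
      have : ContinuousAt (fun ε : ℝ => ((1 - I * ε * ((2 * Real.pi * ξ : ℝ) : ℂ)) ^ 2)⁻¹) 0 := by
        apply ContinuousAt.inv₀ (by fun_prop)
        simp
      simpa [ContinuousAt] using this
    · filter_upwards with ε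
      exact ((hBm.mul (hmolm ε)).aestronglyMeasurable).mul (𝓕 f).continuous.aestronglyMeasurable
    · filter_upwards [self_mem_nhdsWithin] with ε hε
      filter_upwards with ξ
      rw [norm_mul, norm_mul]
      have h2 : ‖mol ε ((2 * Real.pi * ξ : ℝ) : ℂ)‖ ≤ 1 :=
        (hmolb ε hε _).trans (inv_le_one_of_one_le₀ (by nlinarith [sq_nonneg (ε * (2 * Real.pi * ξ))]))
      have := mul_le_one₀ (hBb ξ) (norm_nonneg _) h2
      calc _ ≤ 1 * ‖𝓕 f ξ‖ := by gcongr
        _ = _ := one_mul _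
  refine (tendsto_nhds_unique (tendsto_const_nhds.congr' ?_) hlim).symm
  filter_upwards [self_mem_nhdsWithin] with ε hε using (hz ε hε).symm

lemma sch_sq (V : 𝓢(ℝ, ℂ)) : Integrable (fun x => ‖V x‖ ^ 2) :=
  (memLp_two_iff_integrable_sq_norm V.continuous.aestronglyMeasurable).mp (V.memLp 2 volume)

lemma cut_le (a δ x : ℝ) : ‖(cut a δ x : ℂ)‖ ≤ 1 := by
  rw [Complex.norm_real, cut, Real.norm_of_nonneg (Real.smoothTransition.nonneg _)]
  exact Real.smoothTransition.le_one _

lemma half_bound {T : ℝ → ℂ} {Tt : ℂ → ℂ} (hT : HardyExt T Tt) (hTm : Measurable T) (V : 𝓢(ℝ, ℂ))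
    (a : ℝ) :
    ∫ y in Ici a, ‖∫ ξ : ℝ, T (2 * Real.pi * ξ) * Complex.exp (I * (2 * Real.pi * ξ : ℝ) * y) *
      𝓕 V ξ‖ ^ 2 ≤ ∫ y in Ici a, ‖V y‖ ^ 2 := by
  have hTb : ∀ k, ‖T k‖ ≤ 1 := fun k => by
    rw [← hT.agree]; exact hT.bounded _ (by simp)
  have hexp : ∀ k s : ℝ, ‖Complex.exp (I * k * s)‖ = 1 := fun k s => by
    rw [Complex.norm_exp]; simp
  have hTm' : Measurable (fun ξ : ℝ => T (2 * Real.pi * ξ)) := hTm.comp (by fun_prop)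
  have hint : ∀ (W : 𝓢(ℝ, ℂ)) (y : ℝ), Integrable (fun ξ : ℝ => T (2 * Real.pi * ξ) *
      Complex.exp (I * (2 * Real.pi * ξ : ℝ) * y) * 𝓕 W ξ) := by
    intro W y
    refine (𝓕 W).integrable.norm.mono' ?_ (.of_forall fun ξ => ?_)
    · exact ((hTm'.mul (by fun_prop)).aestronglyMeasurable).mul (𝓕 W).continuous.aestronglyMeasurable
    · rw [norm_mul, norm_mul, hexp, mul_one]
      exact mul_le_of_le_one_left (norm_nonneg _) (hTb _)
  have step : ∀ δ : ℝ, 0 < δ →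
      ∫ y in Ici a, ‖∫ ξ : ℝ, T (2 * Real.pi * ξ) * Complex.exp (I * (2 * Real.pi * ξ : ℝ) * y) *
      𝓕 V ξ‖ ^ 2 ≤ ∫ y, ‖(cut a δ y : ℂ) * V y‖ ^ 2 := by
    intro δ hδ
    obtain ⟨W, hW⟩ : ∃ W : 𝓢(ℝ, ℂ), ∀ x, W x = (cut a δ x : ℂ) * V x :=
      ⟨SchwartzMap.smulLeftCLM ℂ (fun x => (cut a δ x : ℂ)) V, fun x => by
        rw [SchwartzMap.smulLeftCLM_apply_apply (temp_cut a δ), smul_eq_mul]⟩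
    set h : ℝ → ℂ := fun ξ => T (2 * Real.pi * ξ) * 𝓕 W ξ with hh
    have hle : ∀ ξ, ‖h ξ‖ ≤ ‖𝓕 W ξ‖ := fun ξ => by
      rw [hh]; simp only [norm_mul]
      exact mul_le_of_le_one_left (norm_nonneg _) (hTb _)
    have hm : AEStronglyMeasurable h :=
      hTm'.aestronglyMeasurable.mul (𝓕 W).continuous.aestronglyMeasurable
    have h1 : Integrable h := (𝓕 W).integrable.mono hm (.of_forall hle)
    have h2 : MemLp h 2 := ((𝓕 W).memLp 2 volume).mono hm (.of_forall hle)
    obtain ⟨p1, p2⟩ := plancherel_l1l2 h1 h2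
    have hi : Integrable (fun x => ‖𝓕 h x‖ ^ 2) :=
      (memLp_two_iff_integrable_sq_norm p1.1).mp p1
    have heq : ∀ y ∈ Ici a, ‖∫ ξ : ℝ, T (2 * Real.pi * ξ) *
        Complex.exp (I * (2 * Real.pi * ξ : ℝ) * y) * 𝓕 V ξ‖ ^ 2 = ‖𝓕 h (-y)‖ ^ 2 := by
      intro y hy
      have hv := vanish hT hTm (V - W) (a := a) (y := y) (fun x hx => by
        have hc : cut a δ x = 1 := by
          apply Real.smoothTransition.one_of_one_le
          rw [le_div_iff₀ hδ]; linarith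
        simp [hW, hc]) hy
      have hs : 𝓕 (V - W) = 𝓕 V - 𝓕 W :=
        (SchwartzMap.fourierTransformCLM ℂ (V := ℝ) (E := ℂ)).map_sub V W
      simp only [hs, sub_apply, mul_sub] at hv
      rw [integral_sub (hint V y) (hint W y), sub_eq_zero] at hv
      rw [hv, Real.fourier_real_eq_integral_exp_smul]
      congr 2
      congr 1; funext ξ
      rw [hh, smul_eq_mul]
      have : Complex.exp (I * (2 * Real.pi * ξ : ℝ) * y) =
          Complex.exp (((-2 * Real.pi * ξ * -y : ℝ) : ℂ) * I) := by
        congr 1; push_cast; ring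
      rw [this]; ring
    rw [setIntegral_congr_fun measurableSet_Ici heq]
    calc _ ≤ ∫ y, ‖𝓕 h (-y)‖ ^ 2 :=
          setIntegral_le_integral hi.comp_neg (.of_forall fun _ => by positivity)
      _ = ∫ y, ‖𝓕 h y‖ ^ 2 := integral_neg_eq_self (fun y => ‖𝓕 h y‖ ^ 2) volume
      _ = ∫ y, ‖h y‖ ^ 2 := p2
      _ ≤ ∫ y, ‖𝓕 W y‖ ^ 2 := by
          apply integral_mono_of_nonneg (.of_forall fun _ => by positivity) (sch_sq (𝓕 W))
          exact .of_forall fun y => by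
            have := hle y
            show ‖h y‖ ^ 2 ≤ ‖𝓕 W y‖ ^ 2
            gcongr
      _ = ∫ y, ‖W y‖ ^ 2 := SchwartzMap.integral_norm_sq_fourier W
      _ = _ := by simp only [hW]
  have hlim : Tendsto (fun δ : ℝ => ∫ y, ‖(cut a δ y : ℂ) * V y‖ ^ 2) (nhdsWithin 0 (Ioi 0))
      (nhds (∫ y, (Ici a).indicator (fun y => ‖V y‖ ^ 2) y)) := by
    apply tendsto_integral_filter_of_dominated_convergence (fun y => ‖V y‖ ^ 2) _ _ (sch_sq V)
    · filter_upwards with y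
      apply tendsto_const_nhds.congr'
      by_cases hy : a ≤ y
      · filter_upwards [self_mem_nhdsWithin] with δ hδ
        have hδ' : 0 < δ := hδ
        have hc : cut a δ y = 1 := by
          apply Real.smoothTransition.one_of_one_le
          rw [le_div_iff₀ hδ']; linarith
        rw [indicator_of_mem (by exact hy), hc]; simp
      · have : Ioo (0:ℝ) (a - y) ∈ nhdsWithin (0:ℝ) (Ioi 0) :=
          Ioo_mem_nhdsGT (by linarith)
        filter_upwards [this] with δ hδ
        have hc : cut a δ y = 0 := by
          apply Real.smoothTransition.zero_of_nonpos
          apply div_nonpos_of_nonpos_of_nonneg _ hδ.1.le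
          linarith [hδ.2]
        rw [indicator_of_notMem (by exact hy), hc]; simp
    · filter_upwards with δ
      have : Continuous (fun y => (cut a δ y : ℂ)) := (temp_cut a δ).1.continuous
      exact ((this.mul V.continuous).norm.pow 2).aestronglyMeasurable
    · filter_upwards with δ
      filter_upwards with y
      rw [Real.norm_of_nonneg (by positivity), norm_mul]
      have : ‖(cut a δ y : ℂ)‖ * ‖V y‖ ≤ ‖V y‖ := mul_le_of_le_one_left (norm_nonneg _) (cut_le a δ y)
      gcongr
  rw [integral_indicator measurableSet_Ici] at hlim
  refine ge_of_tendsto hlim ?_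
  filter_upwards [self_mem_nhdsWithin] with δ hδ using step δ hδ

lemma fourier_k (ψ : 𝓢(ℝ, ℂ)) (ξ : ℝ) :
    ∫ y : ℝ, Complex.exp (-(I * (2 * Real.pi * ξ : ℝ) * y)) * ψ y = 𝓕 ψ ξ := by
  rw [SchwartzMap.fourier_coe, Real.fourier_real_eq_integral_exp_smul]
  congr 1; funext y
  rw [smul_eq_mul]
  congr 2; push_cast; ring

lemma rescale (F : ℝ → ℂ) :
    (Real.sqrt (2 * Real.pi) : ℂ)⁻¹ * ∫ k : ℝ, (Real.sqrt (2 * Real.pi) : ℂ)⁻¹ * F k =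
    ∫ ξ : ℝ, F (2 * Real.pi * ξ) := by
  have hp : 0 < 2 * Real.pi := by positivity
  rw [Measure.integral_comp_mul_left F (2 * Real.pi), integral_const_mul, ← mul_assoc, ← mul_inv,
    ← Complex.ofReal_mul, Real.mul_self_sqrt hp.le, abs_of_pos (inv_pos.mpr hp), ← Complex.ofReal_inv,
    Complex.real_smul]

/-- In the setting of the eigenfunction expansion (Schwartz initial state
`ψ₀` supported in `(−∞, x₀]`, unitary scattering matrix with conjugation symmetries, and a
transmission amplitude `T` with a bounded analytic extension to the upper half-plane having
boundary values `T` a.e.), the tunneled wave `u` satisfies, for every `a ≥ x₁`,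
`∫_{[a,∞)} |u(x)|² dx ≤ ∫_{[a,∞)} |(e^{-itH₀}ψ₀)(x)|² dx`, where
`(e^{-itH₀}ψ₀)(x) = (2π)^{-1/2} ∫ e^{ikx} e^{-itk²} (Fψ₀)(k) dk`. -/
theorem statement14 (x₀ x₁ : ℝ) (hx : x₀ < x₁)
    (T Rl Rr : ℝ → ℂ) (hTm : Measurable T) (hRlm : Measurable Rl) (hRrm : Measurable Rr)
    (hTsymm : ∀ k : ℝ, T (-k) = starRingEnd ℂ (T k))
    (hRlsymm : ∀ k : ℝ, Rl (-k) = starRingEnd ℂ (Rl k))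
    (hRrsymm : ∀ k : ℝ, Rr (-k) = starRingEnd ℂ (Rr k))
    (hunit : ∀ k : ℝ,
      Matrix.of ![![T k, Rl k], ![Rr k, T k]] ∈ Matrix.unitaryGroup (Fin 2) ℂ)
    (Tt : ℂ → ℂ) (hTt : HardyExt T Tt)
    (φ₁ φ₂ : ℝ → ℝ → ℂ)
    (hφ₁l : ∀ k : ℝ, ∀ x : ℝ, x ≤ x₀ →
      φ₁ x k = Rl k * Complex.exp (-(Complex.I * k * x)) + Complex.exp (Complex.I * k * x))
    (hφ₁r : ∀ k : ℝ, ∀ x : ℝ, x₁ ≤ x → φ₁ x k = T k * Complex.exp (Complex.I * k * x))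
    (hφ₂l : ∀ k : ℝ, ∀ x : ℝ, x ≤ x₀ → φ₂ x k = T k * Complex.exp (-(Complex.I * k * x)))
    (hφ₂r : ∀ k : ℝ, ∀ x : ℝ, x₁ ≤ x →
      φ₂ x k = Rr k * Complex.exp (Complex.I * k * x) + Complex.exp (-(Complex.I * k * x)))
    (ψ₀ : SchwartzMap ℝ ℂ) (hsupp : ∀ x : ℝ, x₀ < x → ψ₀ x = 0)
    (t : ℝ) (c₁ c₂ : ℝ → ℂ)
    (hc₁ : ∀ k : ℝ, c₁ k = (Real.sqrt (2 * Real.pi) : ℂ)⁻¹ *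
      ∫ y : ℝ, starRingEnd ℂ (φ₁ y k) * ψ₀ y)
    (hc₂ : ∀ k : ℝ, c₂ k = (Real.sqrt (2 * Real.pi) : ℂ)⁻¹ *
      ∫ y : ℝ, starRingEnd ℂ (φ₂ y k) * ψ₀ y)
    (u : ℝ → ℂ)
    (hu : ∀ x : ℝ, u x = (Real.sqrt (2 * Real.pi) : ℂ)⁻¹ *
      ∫ k : ℝ, (1 / 2 : ℂ) * (c₁ k * φ₁ x k + c₂ k * φ₂ x k) *
        Complex.exp (-(Complex.I * t * k ^ 2)))
    (v : ℝ → ℂ)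
    (hv : ∀ x : ℝ, v x = (Real.sqrt (2 * Real.pi) : ℂ)⁻¹ *
      ∫ k : ℝ, Complex.exp (Complex.I * k * x) * Complex.exp (-(Complex.I * t * k ^ 2)) *
        ((Real.sqrt (2 * Real.pi) : ℂ)⁻¹ *
          ∫ y : ℝ, Complex.exp (-(Complex.I * k * y)) * ψ₀ y))
    (a : ℝ) (ha : x₁ ≤ a) :
    ∫ x in Set.Ici a, ‖u x‖ ^ 2 ≤ ∫ x in Set.Ici a, ‖v x‖ ^ 2 := by
  have hp : 0 < 2 * Real.pi := by positivity
  set P : ℝ → ℂ := fun k => ∫ y : ℝ, Complex.exp (-(I * k * y)) * ψ₀ y with hP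
  have hPF : ∀ ξ : ℝ, P (2 * Real.pi * ξ) = FourierTransform.fourier ψ₀ ξ := fun ξ => fourier_k ψ₀ ξ
  have hPint : Integrable P := by
    have h1 : Integrable (fun ξ => P (2 * Real.pi * ξ)) := by
      simp only [hPF]; exact (FourierTransform.fourier ψ₀).integrable
    exact (integrable_comp_mul_left_iff P hp.ne').mp h1
  have hexp : ∀ k s : ℝ, ‖Complex.exp (I * k * s)‖ = 1 := fun k s => by
    rw [Complex.norm_exp]; simp
  have hexp' : ∀ k s : ℝ, ‖Complex.exp (-(I * k * s))‖ = 1 := fun k s => by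
    rw [Complex.norm_exp]; simp
  have hTb : ∀ k, ‖T k‖ ≤ 1 := fun k => by
    rw [← hTt.agree]; exact hTt.bounded _ (by simp)
  have hi1 : ∀ k : ℝ, Integrable (fun y : ℝ => Complex.exp (-(I * k * y)) * ψ₀ y) := by
    intro k
    refine ψ₀.integrable.norm.mono' ?_ (.of_forall fun y => by rw [norm_mul, hexp', one_mul])
    exact (Continuous.mul (by fun_prop) ψ₀.continuous).aestronglyMeasurable
  have hneg : ∀ k y : ℝ, Complex.exp (-(I * (-k : ℝ) * y)) = Complex.exp (I * k * y) := by
    intro k y; congr 1; push_cast; ring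
  have hcj : ∀ k y : ℝ, starRingEnd ℂ (Complex.exp (I * k * y)) = Complex.exp (-(I * k * y)) := by
    intro k y
    rw [← Complex.exp_conj]; congr 1; simp
  have hcj' : ∀ k y : ℝ, starRingEnd ℂ (Complex.exp (-(I * k * y))) = Complex.exp (I * k * y) := by
    intro k y
    rw [← Complex.exp_conj]; congr 1; simp
  have hC1 : ∀ k, c₁ k = (Real.sqrt (2 * Real.pi) : ℂ)⁻¹ *
      (starRingEnd ℂ (Rl k) * P (-k) + P k) := by
    intro k
    rw [hc₁]
    congr 1
    rw [hP, ← integral_const_mul, ← integral_add ((hi1 (-k)).const_mul _) (hi1 k)]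
    congr 1; funext y
    by_cases hy : y ≤ x₀
    · rw [hφ₁l k y hy, map_add, map_mul, hcj, hcj', hneg]; ring
    · rw [hsupp y (not_le.mp hy)]; simp
  have hC2 : ∀ k, c₂ k = (Real.sqrt (2 * Real.pi) : ℂ)⁻¹ * (starRingEnd ℂ (T k) * P (-k)) := by
    intro k
    rw [hc₂]
    congr 1
    rw [hP, ← integral_const_mul]
    congr 1; funext y
    by_cases hy : y ≤ x₀
    · rw [hφ₂l k y hy, map_mul, hcj', hneg]; ring
    · rw [hsupp y (not_le.mp hy)]; simp
  have hU : ∀ k, starRingEnd ℂ (Rl k) * T k + starRingEnd ℂ (T k) * Rr k = 0 := by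
    intro k
    have h := (Matrix.mem_unitaryGroup_iff).mp (hunit k)
    have h10 := congrFun (congrFun h 1) 0
    simp [Matrix.mul_apply, Fin.sum_univ_two, Matrix.star_apply] at h10
    linear_combination h10
  obtain ⟨V, hV⟩ : ∃ V : SchwartzMap ℝ ℂ, ∀ ξ, FourierTransform.fourier V ξ =
      Complex.exp (-(I * t * ((2 * Real.pi * ξ : ℝ) : ℂ) ^ 2)) * FourierTransform.fourier ψ₀ ξ := by
    refine ⟨FourierTransformInv.fourierInv (SchwartzMap.smulLeftCLM ℂ
      (fun ξ : ℝ => Complex.exp (-(I * t * ((2 * Real.pi * ξ : ℝ) : ℂ) ^ 2)))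
      (FourierTransform.fourier ψ₀)), fun ξ => ?_⟩
    rw [FourierTransform.fourier_fourierInv_eq,
      SchwartzMap.smulLeftCLM_apply_apply (temp_phase t), smul_eq_mul]
  have hvV : ∀ x, v x = V x := by
    intro x
    have e1 : v x = ∫ ξ : ℝ, (fun k : ℝ => Complex.exp (I * k * x) * Complex.exp (-(I * t * k ^ 2)) * P k)
        (2 * Real.pi * ξ) := by
      have hr := rescale (fun k : ℝ => Complex.exp (I * k * x) * Complex.exp (-(I * t * k ^ 2)) * P k)
      rw [hv, ← hr]
      congr 2; funext k; rw [hP]; ring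
    have e2 : V x = FourierTransformInv.fourierInv (FourierTransform.fourier V) x := by
      rw [FourierTransform.fourierInv_fourier_eq]
    rw [e1, e2, SchwartzMap.fourierInv_coe, Real.fourierInv_eq']
    congr 1; funext ξ
    simp only [hPF, hV, smul_eq_mul]
    rw [mul_assoc]
    congr 2
    simp; ring
  have huU : ∀ x ∈ Ici a, ‖u x‖ ^ 2 = ‖∫ ξ : ℝ, T (2 * Real.pi * ξ) *
      Complex.exp (I * (2 * Real.pi * ξ : ℝ) * x) * FourierTransform.fourier V ξ‖ ^ 2 := by
    intro x hxa
    have hx1 : x₁ ≤ x := ha.trans hxa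
    set A : ℝ → ℂ := fun k => T k * Complex.exp (I * k * x) * Complex.exp (-(I * t * k ^ 2)) * P k with hA
    have hAint : Integrable A := by
      refine hPint.norm.mono' ?_ (.of_forall fun k => ?_)
      · exact (((hTm.mul (by fun_prop)).mul (by fun_prop)).aestronglyMeasurable).mul
          hPint.aestronglyMeasurable
      · have : ‖Complex.exp (-(I * t * k ^ 2))‖ = 1 := by
          have := hexp' t (k ^ 2)
          push_cast at this; exact this
        rw [hA]
        simp only [norm_mul, hexp, this, mul_one]
        exact mul_le_of_le_one_left (norm_nonneg _) (hTb _)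
    have e1 : u x = ∫ ξ : ℝ, A (2 * Real.pi * ξ) := by
      rw [← rescale A, hu, integral_const_mul]
      congr 1
      have e2 : ∀ k : ℝ, (1 / 2 : ℂ) * (c₁ k * φ₁ x k + c₂ k * φ₂ x k) *
          Complex.exp (-(I * t * k ^ 2)) =
          (Real.sqrt (2 * Real.pi) : ℂ)⁻¹ * ((1 / 2 : ℂ) * (A k + A (-k))) := by
        intro k
        have hn : A (-k) = starRingEnd ℂ (T k) * Complex.exp (-(I * k * x)) *
            Complex.exp (-(I * t * k ^ 2)) * P (-k) := by
          rw [hA]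
          simp only [hTsymm]
          congr 3
          · congr 1; push_cast; ring
          · push_cast; ring
        rw [hn, hA, hC1, hC2, hφ₁r k x hx1, hφ₂r k x hx1]
        linear_combination ((Real.sqrt (2 * Real.pi) : ℂ)⁻¹ * (1 / 2) * P (-k) *
          Complex.exp (I * k * x) * Complex.exp (-(I * t * k ^ 2))) * hU k
      simp only [e2]
      rw [integral_const_mul, integral_const_mul, integral_add hAint hAint.comp_neg,
        integral_neg_eq_self A volume]
      ring
    rw [e1]
    congr 2
    congr 1; funext ξ
    rw [hA]
    simp only [hPF, hV]
    ring
  rw [setIntegral_congr_fun measurableSet_Ici huU]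
  simp only [hvV]
  exact half_bound hTt hTm V a
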